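/- Let n ≥ 3 be an integer and t ∈ ℂ. Define G = −40 + 22n + 60n^2 − 64n^3 + 16n^4 + 29t − 40n^2 t + 16n^3 t − 6t^2 − 4n t^2 + 4n^2 t^2, H = 44 + 56n − 400n^2 + 580n^3 − 360n^4 + 80n^5 − 22t − 65nt + 220n^2 t − 240n^3 t + 80n^4 t + 10n t^2 − 30n^2 t^2 + 20n^3 t^2, and F = −352 + 1608n + 1200n^2 − 11792n^3 + 15800n^4 − 3904n^5 − 7296n^6 + 6656n^7 − 2176n^8 + 256n^9 + 388t − 992nt − 5486n^2 t + 17312n^3 t − 13688n^4 t − 2368n^5 t + 7936n^6 t − 3584n^7 t + 512n^8 t − 130t^2 − 221n t^2 + 4352n^2 t^2 − 7772n^3 t^2 + 2640n^4 t^2 + 2784n^5 t^2 − 2112n^6 t^2 + 384n^7 t^2 + 12t^3 + 228n t^3 − 1186n^2 t^3 + 1200n^3 t^3 + 160n^4 t^3 − 512n^5 t^3 + 128n^6 t^3 − 36n t^4 + 100n^2 t^4 − 40n^3 t^4 − 40n^4 t^4 + 16n^5 t^4. Assume t + 2n − 2 ≠ 0, 1 − 6n + 4n^2 + 2nt ≠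 0, 2 − 8n + 4n^2 − t + 2nt ≠ 0, G ≠ 0, and H ≠ 0. Set c = −n(5 − 10n + 4n^2 − 2t + 2nt)(4 − 8n + 4n^2 − t + 2nt)/(t + 2n − 2) and λ = −(2n + t − 2)·F / (7(n−1)(1 − 6n + 4n^2 + 2nt)(2 − 8n + 4n^2 − t + 2nt)·G·H). Then q_n(c,λ) = 0. -/

import Mathlib

/-!
Put `ψ = t + (2n - 2)`, the level shifted by the dual Coxeter number of `so_{2n}`. Feigin–Frenkel
duality `ψ ↔ ψ⁻¹` fixes the central charge, so `c` is affine in `ψ + ψ⁻¹`, and `G`, `H`, `F` become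
palindromic polynomials in `ψ`. The polynomial `q_n(c, λ)` is affine in `λ`. Along `c = c(ψ)`, the
factors of the coefficient of `λ` acquire the numerators `G`, `H` and that of `c - 1`, and the
term free of `λ` is a multiple of `F / ψ ^ 2`. The formula for `λ` is the solution of this linear
equation.
-/

/-- The type-D truncation polynomial `q_n(c,λ)`. -/
noncomputable def qD (n c lam : ℂ) : ℂ :=
  7 * lam * (c - 1) * (22 + 5 * c)
      * (-3 * c + 10 * n - 2 * c * n - 19 * n ^ 2 + 2 * c * n ^ 2 + 12 * n ^ 3)
    - (-6 * c - 9 * c ^ 2 - 28 * n + 120 * c * n - 2 * c ^ 2 * n + 10 * n ^ 2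
        - 147 * c * n ^ 2 + 2 * c ^ 2 * n ^ 2 + 24 * n ^ 3 + 36 * c * n ^ 3)

/-- The only factor of the coefficient of `λ` in `q_n(c, λ)` that depends on `n`. -/
def typeDAffineFactor {R : Type*} [CommRing R] (n c : R) : R :=
  -3 * c + 10 * n - 2 * c * n - 19 * n ^ 2 + 2 * c * n ^ 2 + 12 * n ^ 3

/-- Minus the term of `q_n(c, λ)` that does not involve `λ`. -/
def typeDConstantTerm {R : Type*} [CommRing R] (n c : R) : R :=
  -6 * c - 9 * c ^ 2 - 28 * n + 120 * c * n - 2 * c ^ 2 * n + 10 * n ^ 2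
    - 147 * c * n ^ 2 + 2 * c ^ 2 * n ^ 2 + 24 * n ^ 3 + 36 * c * n ^ 3

/-- The truncation polynomial `q_n(c, λ)` over any commutative ring; `qD` is the case of `ℂ`. -/
def typeDTruncation {R : Type*} [CommRing R] (n c lam : R) : R :=
  7 * lam * (c - 1) * (22 + 5 * c) * typeDAffineFactor n c - typeDConstantTerm n c

theorem qD_eq_typeDTruncation (n c lam : ℂ) : qD n c lam = typeDTruncation n c lam :=
  rfl

namespace typeDTruncation

/-- The polynomial `G` of the parametrization, in the shifted level `ψ`. -/
def polyG {R : Type*} [CommRing R] (n ψ : R) : R :=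
  2 * (2 * n ^ 2 - 2 * n - 3) * (ψ ^ 2 + 1) - (8 * n ^ 2 - 8 * n - 5) * ψ

/-- The polynomial `H` of the parametrization, in the shifted level `ψ`. -/
def polyH {R : Type*} [CommRing R] (n ψ : R) : R :=
  10 * n * (n - 1) * (2 * n - 1) * (ψ ^ 2 + 1) - (40 * n ^ 3 - 60 * n ^ 2 + 25 * n + 22) * ψ

/-- The polynomial `F` of the parametrization, in the shifted level `ψ`. -/
def polyF {R : Type*} [CommRing R] (n ψ : R) : R :=
  4 * n * (n - 1) * (2 * n - 1) * (2 * n ^ 2 - 2 * n - 9) * (ψ ^ 4 + 1)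
    - (64 * n ^ 5 - 160 * n ^ 4 - 80 * n ^ 3 + 98 * n ^ 2 + 60 * n - 12) * (ψ ^ 3 + ψ)
    + (96 * n ^ 5 - 240 * n ^ 4 - 80 * n ^ 3 - 4 * n ^ 2 + 211 * n - 58) * ψ ^ 2

variable {K : Type*} [Field K]

/-- The central charge of `W^t(so_{2n}, f_prin)`, in the shifted level `ψ`. -/
def centralCharge (n ψ : K) : K :=
  -n * ((2 * n - 2) * ψ - (2 * n - 1)) * ((2 * n - 1) * ψ - (2 * n - 2)) / ψ

/-- The parameter `λ` at which `W^ev(c, λ)` has the orbifold as a quotient, in the shifted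
level `ψ`. -/
def evenSpinParameter (n ψ : K) : K :=
  -ψ * polyF n ψ / (7 * (n - 1) * (2 * n * ψ - (2 * n - 1)) * ((2 * n - 1) * ψ - 2 * n)
    * polyG n ψ * polyH n ψ)

variable {ψ : K}

theorem centralCharge_sub_one (n : K) (hψ : ψ ≠ 0) :
    centralCharge n ψ - 1
      = -((n - 1) * (2 * n * ψ - (2 * n - 1)) * ((2 * n - 1) * ψ - 2 * n)) / ψ := by
  unfold centralCharge
  field_simp
  ring

theorem twentyTwo_add_five_mul_centralCharge (n : K) (hψ : ψ ≠ 0) :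
    22 + 5 * centralCharge n ψ = -polyH n ψ / ψ := by
  unfold centralCharge polyH
  field_simp
  ring

theorem typeDAffineFactor_centralCharge (n : K) (hψ : ψ ≠ 0) :
    typeDAffineFactor n (centralCharge n ψ)
      = -(n * (n - 1) * (2 * n - 1) * polyG n ψ) / ψ := by
  unfold typeDAffineFactor centralCharge polyG
  field_simp
  ring

theorem typeDConstantTerm_centralCharge (n : K) (hψ : ψ ≠ 0) :
    typeDConstantTerm n (centralCharge n ψ)
      = n * (n - 1) * (2 * n - 1) * polyF n ψ / ψ ^ 2 := by
  unfold typeDConstantTerm centralCharge polyF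
  field_simp
  ring

end typeDTruncation

open typeDTruncation

theorem typeDorbifold_parametrization_on_curve_general {K : Type*} [Field K] (h7 : (7 : K) ≠ 0)
    {n ψ : K} (hn : n ≠ 1) (hψ : ψ ≠ 0) (hA : 2 * n * ψ - (2 * n - 1) ≠ 0)
    (hB : (2 * n - 1) * ψ - 2 * n ≠ 0) (hG : polyG n ψ ≠ 0) (hH : polyH n ψ ≠ 0) :
    typeDTruncation n (centralCharge n ψ) (evenSpinParameter n ψ) = 0 := by
  have hn1 : n - 1 ≠ 0 := sub_ne_zero.mpr hn
  rw [typeDTruncation, centralCharge_sub_one n hψ, twentyTwo_add_five_mul_centralCharge n hψ,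
    typeDAffineFactor_centralCharge n hψ, typeDConstantTerm_centralCharge n hψ,
    evenSpinParameter, sub_eq_zero]
  generalize 2 * n * ψ - (2 * n - 1) = A at *
  generalize (2 * n - 1) * ψ - 2 * n = B at *
  field_simp

/-- The rational parametrization of the truncation curve `V(J_n)` by the level `t`
of the orbifold `W^t(so_{2n}, f_prin)^{ℤ₂}` lies on `{q_n = 0}`. -/
theorem typeDorbifold_parametrization_on_curve (n : ℤ) (hn : 3 ≤ n) (t : ℂ)
    (nn : ℂ) (hnn : nn = (n : ℂ))
    (G H F c lam : ℂ)
    (hG : G = -40 + 22 * nn + 60 * nn ^ 2 - 64 * nn ^ 3 + 16 * nn ^ 4 + 29 * t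
      - 40 * nn ^ 2 * t + 16 * nn ^ 3 * t - 6 * t ^ 2 - 4 * nn * t ^ 2
      + 4 * nn ^ 2 * t ^ 2)
    (hH : H = 44 + 56 * nn - 400 * nn ^ 2 + 580 * nn ^ 3 - 360 * nn ^ 4
      + 80 * nn ^ 5 - 22 * t - 65 * nn * t + 220 * nn ^ 2 * t - 240 * nn ^ 3 * t
      + 80 * nn ^ 4 * t + 10 * nn * t ^ 2 - 30 * nn ^ 2 * t ^ 2
      + 20 * nn ^ 3 * t ^ 2)
    (hF : F = -352 + 1608 * nn + 1200 * nn ^ 2 - 11792 * nn ^ 3 + 15800 * nn ^ 4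
      - 3904 * nn ^ 5 - 7296 * nn ^ 6 + 6656 * nn ^ 7 - 2176 * nn ^ 8
      + 256 * nn ^ 9 + 388 * t - 992 * nn * t - 5486 * nn ^ 2 * t
      + 17312 * nn ^ 3 * t - 13688 * nn ^ 4 * t - 2368 * nn ^ 5 * t
      + 7936 * nn ^ 6 * t - 3584 * nn ^ 7 * t + 512 * nn ^ 8 * t - 130 * t ^ 2
      - 221 * nn * t ^ 2 + 4352 * nn ^ 2 * t ^ 2 - 7772 * nn ^ 3 * t ^ 2
      + 2640 * nn ^ 4 * t ^ 2 + 2784 * nn ^ 5 * t ^ 2 - 2112 * nn ^ 6 * t ^ 2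
      + 384 * nn ^ 7 * t ^ 2 + 12 * t ^ 3 + 228 * nn * t ^ 3
      - 1186 * nn ^ 2 * t ^ 3 + 1200 * nn ^ 3 * t ^ 3 + 160 * nn ^ 4 * t ^ 3
      - 512 * nn ^ 5 * t ^ 3 + 128 * nn ^ 6 * t ^ 3 - 36 * nn * t ^ 4
      + 100 * nn ^ 2 * t ^ 4 - 40 * nn ^ 3 * t ^ 4 - 40 * nn ^ 4 * t ^ 4
      + 16 * nn ^ 5 * t ^ 4)
    (h1 : t + 2 * nn - 2 ≠ 0)
    (h2 : 1 - 6 * nn + 4 * nn ^ 2 + 2 * nn * t ≠ 0)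
    (h3 : 2 - 8 * nn + 4 * nn ^ 2 - t + 2 * nn * t ≠ 0)
    (hGne : G ≠ 0) (hHne : H ≠ 0)
    (hc : c = -nn * (5 - 10 * nn + 4 * nn ^ 2 - 2 * t + 2 * nn * t)
        * (4 - 8 * nn + 4 * nn ^ 2 - t + 2 * nn * t) / (t + 2 * nn - 2))
    (hlam : lam = -(2 * nn + t - 2) * F
        / (7 * (nn - 1) * (1 - 6 * nn + 4 * nn ^ 2 + 2 * nn * t)
            * (2 - 8 * nn + 4 * nn ^ 2 - t + 2 * nn * t) * G * H)) :
    qD nn c lam = 0 := by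
  have hn1 : nn ≠ 1 := by rw [hnn]; exact_mod_cast (by lia : n ≠ 1)
  obtain ⟨ψ, hψ⟩ : ∃ ψ, ψ = t + 2 * nn - 2 := ⟨_, rfl⟩
  have hψ' : 2 * nn + t - 2 = ψ := by rw [hψ]; ring
  have hA : 1 - 6 * nn + 4 * nn ^ 2 + 2 * nn * t = 2 * nn * ψ - (2 * nn - 1) := by
    rw [hψ]; ring
  have hB : 2 - 8 * nn + 4 * nn ^ 2 - t + 2 * nn * t = (2 * nn - 1) * ψ - 2 * nn := by
    rw [hψ]; ring
  have hGψ : G = polyG nn ψ := by rw [hG, hψ, polyG]; ring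
  have hHψ : H = polyH nn ψ := by rw [hH, hψ, polyH]; ring
  have hFψ : F = polyF nn ψ := by rw [hF, hψ, polyF]; ring
  have hcψ : c = centralCharge nn ψ := by rw [hc, hψ, centralCharge]; ring
  have hlamψ : lam = evenSpinParameter nn ψ := by
    rw [hlam, hψ', hA, hB, hGψ, hHψ, hFψ, evenSpinParameter]
  rw [qD_eq_typeDTruncation, hcψ, hlamψ]
  exact typeDorbifold_parametrization_on_curve_general (by norm_num) hn1 (hψ ▸ h1) (hA ▸ h2)
    (hB ▸ h3) (hGψ ▸ hGne) (hHψ ▸ hHne)
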